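/- Let A be a finite-dimensional real affine space over V and let g ≠ 0 be a symmetric bilinear form on V. Then there exists a unique symmetric bilinear form C on the dual space of W_g such that: (i) C(ev_P, ev_P) = 0 for every P ∈ A; and (ii) C(φ, ψ) = −g(x_φ, x_ψ) for all linear functionals φ, ψ on W_g that annihilate the constant function 1 (note that constant and, more generally, affine functions belong to W_g), where for such a functional φ, x_φ ∈ V denotes the unique vector satisfying φ(f) = (linear part of f)(x_φ) for every affine function f : A → ℝ. -/

import Mathlib

/-!
Fix an origin `O : A` and put `q P = g (P - O) (P - O) / 2`. Every element of `W_g` has the form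
`a + ℓ (P - O) + c * q P` with `ℓ` linear, because a quadratic function with zero Hessian is
affine; hence `W_g` is finite-dimensional, and the evaluations `ev_P`, having no common zero,
span its dual.

*Existence.* `C φ ψ = φ 1 * ψ q + φ q * ψ 1 - g (x_φ) (x_ψ)` works, where `x_φ : V` is the vector
with `φ (ℓ (· - O)) = ℓ x_φ` for every linear form `ℓ`, given by reflexivity of `V`.

*Uniqueness.* Let `D` be the difference of two solutions. It vanishes on pairs of functionals
annihilating `1`, since such functionals are represented by vectors. Since
`D (ev_P, ev_P) = D (ev_O, ev_O) = 0` and `ev_P - ev_O` annihilates `1`, expanding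
`D (ev_P - ev_O, ev_P - ev_O) = 0` gives `D (ev_O, ev_P) = 0`. The same expansion of
`D (ev_P - ev_O, ev_Q - ev_O) = 0` then gives `D (ev_P, ev_Q) = 0`, and `D = 0` by spanning.
-/

/-- A function `δ : A → ℝ` on a real affine space is *quadratic* if for all points
`P, Q` and all `α, β ∈ ℝ` with `α + β = 1`,
`δ(α·P + β·Q) = α(α−β)·δ(P) + β(β−α)·δ(Q) + 4αβ·δ(midpoint(P,Q))`. -/
def IsQuadraticFn {V A : Type*} [AddCommGroup V] [Module ℝ V] [AddTorsor V A]
    (δ : A → ℝ) : Prop :=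
  ∀ (P Q : A) (α β : ℝ), α + β = 1 →
    δ (AffineMap.lineMap P Q β) =
      α * (α - β) * δ P + β * (β - α) * δ Q + 4 * α * β * δ (midpoint ℝ P Q)

/-- `B` is the Hessian of `δ`. -/
def IsHessianOf {V A : Type*} [AddCommGroup V] [Module ℝ V] [AddTorsor V A]
    (δ : A → ℝ) (B : LinearMap.BilinForm ℝ V) : Prop :=
  ∀ P Q : A, 2 * δ P + 2 * δ Q - 4 * δ (midpoint ℝ P Q) =
    (1/2 : ℝ) * B (Q -ᵥ P) (Q -ᵥ P)

/-- `W_g`: the space of quadratic functions `A → ℝ` whose Hessian is a scalar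
multiple of `g`, as a submodule of `A → ℝ`. -/
def Wg {V : Type*} [AddCommGroup V] [Module ℝ V]
    (g : LinearMap.BilinForm ℝ V) (A : Type*) [AddTorsor V A] :
    Submodule ℝ (A → ℝ) where
  carrier := {δ : A → ℝ | IsQuadraticFn δ ∧ ∃ c : ℝ, IsHessianOf δ (c • g)}
  add_mem' := by
    rintro a b ⟨ha1, ca, ha2⟩ ⟨hb1, cb, hb2⟩
    refine ⟨fun P Q α β h => ?_, ca + cb, fun P Q => ?_⟩
    · have h1 := ha1 P Q α β h
      have h2 := hb1 P Q α β h
      simp only [Pi.add_apply]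
      linear_combination h1 + h2
    · have h1 := ha2 P Q
      have h2 := hb2 P Q
      simp only [Pi.add_apply, LinearMap.add_apply, LinearMap.smul_apply,
        smul_eq_mul] at h1 h2 ⊢
      linear_combination h1 + h2
  zero_mem' := by
    refine ⟨fun P Q α β h => ?_, 0, fun P Q => ?_⟩
    · simp only [Pi.zero_apply]; ring
    · simp only [Pi.zero_apply, zero_smul, LinearMap.zero_apply]; ring
  smul_mem' := by
    rintro c a ⟨ha1, ca, ha2⟩
    refine ⟨fun P Q α β h => ?_, c * ca, fun P Q => ?_⟩
    · have h1 := ha1 P Q α β h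
      simp only [Pi.smul_apply, smul_eq_mul]
      linear_combination c * h1
    · have h1 := ha2 P Q
      simp only [Pi.smul_apply, smul_eq_mul, LinearMap.smul_apply] at h1 ⊢
      linear_combination c * h1

/-- The evaluation functional `ev_P : W_g → ℝ` at a point `P`. -/
def evW {V : Type*} [AddCommGroup V] [Module ℝ V]
    (g : LinearMap.BilinForm ℝ V) {A : Type*} [AddTorsor V A] (P : A) :
    Module.Dual ℝ (Wg g A) where
  toFun δ := (δ : A → ℝ) P
  map_add' x y := rfl
  map_smul' c x := rfl

/-- `φ` annihilates the constant function `1 ∈ W_g`. -/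
def AnnihilatesOne {V : Type*} [AddCommGroup V] [Module ℝ V]
    (g : LinearMap.BilinForm ℝ V) {A : Type*} [AddTorsor V A]
    (φ : Module.Dual ℝ (Wg g A)) : Prop :=
  ∀ h1 : (fun _ : A => (1 : ℝ)) ∈ Wg g A, φ ⟨fun _ => (1 : ℝ), h1⟩ = 0

/-- `x ∈ V` represents the functional `φ` on `W_g`: for every affine function
`f : A → ℝ` (an element of `W_g`), `φ(f) = (linear part of f)(x)`. -/
def Represents {V : Type*} [AddCommGroup V] [Module ℝ V]
    (g : LinearMap.BilinForm ℝ V) {A : Type*} [AddTorsor V A]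
    (φ : Module.Dual ℝ (Wg g A)) (x : V) : Prop :=
  ∀ (f : A →ᵃ[ℝ] ℝ) (hf : ⇑f ∈ Wg g A), φ ⟨⇑f, hf⟩ = f.linear x

/-- `C` is a Cayley–Menger form for `g`: a symmetric bilinear form on the dual of
`W_g` such that (i) every evaluation functional `ev_P` is isotropic, and (ii) on
functionals annihilating the constant `1`, `C(φ, ψ) = −g(x_φ, x_ψ)`. -/
def IsCayleyMenger {V : Type*} [AddCommGroup V] [Module ℝ V]
    (g : LinearMap.BilinForm ℝ V) (A : Type*) [AddTorsor V A]
    (C : LinearMap.BilinForm ℝ (Module.Dual ℝ (Wg g A))) : Prop :=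
  (∀ φ ψ, C φ ψ = C ψ φ) ∧
  (∀ P : A, C (evW g P) (evW g P) = 0) ∧
  (∀ (φ ψ : Module.Dual ℝ (Wg g A)) (x y : V),
    AnnihilatesOne g φ → AnnihilatesOne g ψ →
    Represents g φ x → Represents g ψ y → C φ ψ = - g x y)

namespace CayleyMenger

variable {V A : Type*} [AddCommGroup V] [Module ℝ V] [AddTorsor V A]

lemma lineMap_vsub_origin (O P Q : A) (t : ℝ) :
    AffineMap.lineMap P Q t -ᵥ O = (1 - t) • (P -ᵥ O) + t • (Q -ᵥ O) := by
  rw [AffineMap.lineMap_apply, vadd_vsub_assoc, ← vsub_sub_vsub_cancel_right Q P O]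
  module

lemma midpoint_vsub_origin (O P Q : A) :
    midpoint ℝ P Q -ᵥ O = (1 / 2 : ℝ) • ((P -ᵥ O) + (Q -ᵥ O)) := by
  rw [midpoint, lineMap_vsub_origin, invOf_eq_inv]
  module

lemma mem_Wg (g : LinearMap.BilinForm ℝ V) (hgs : ∀ x y, g x y = g y x) (O : A)
    (a : ℝ) (l : Module.Dual ℝ V) (c : ℝ) :
    (fun P : A => a + l (P -ᵥ O) + c * (1 / 2 * g (P -ᵥ O) (P -ᵥ O))) ∈ Wg g A := by
  refine ⟨fun P Q α β h => ?_, c, fun P Q => ?_⟩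
  · obtain rfl : α = 1 - β := by linarith
    simp only [lineMap_vsub_origin, midpoint_vsub_origin, map_add, map_smul,
      LinearMap.add_apply, LinearMap.smul_apply, smul_eq_mul, hgs (Q -ᵥ O) (P -ᵥ O)]
    ring
  · rw [← vsub_sub_vsub_cancel_right Q P O]
    simp only [midpoint_vsub_origin, map_add, map_smul, map_sub, LinearMap.sub_apply,
      LinearMap.add_apply, LinearMap.smul_apply, smul_eq_mul, hgs (Q -ᵥ O) (P -ᵥ O)]
    ring

/-- Coordinates on `W_g` with origin `O`: the triple `(a, ℓ, c)` is sent to the function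
`P ↦ a + ℓ (P - O) + c * (g (P - O) (P - O) / 2)`. -/
noncomputable def coord (g : LinearMap.BilinForm ℝ V) (hgs : ∀ x y, g x y = g y x) (O : A) :
    (ℝ × Module.Dual ℝ V × ℝ) →ₗ[ℝ] Wg g A where
  toFun t := ⟨_, mem_Wg g hgs O t.1 t.2.1 t.2.2⟩
  map_add' s t := by
    ext P
    simp only [Prod.fst_add, Prod.snd_add, LinearMap.add_apply, Submodule.coe_add, Pi.add_apply]
    ring
  map_smul' r t := by
    ext P
    simp only [Prod.smul_fst, Prod.smul_snd, LinearMap.smul_apply, Submodule.coe_smul,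
      Pi.smul_apply, smul_eq_mul, RingHom.id_apply]
    ring

lemma coord_apply (g : LinearMap.BilinForm ℝ V) (hgs : ∀ x y, g x y = g y x) (O P : A)
    (t : ℝ × Module.Dual ℝ V × ℝ) :
    (coord g hgs O t : A → ℝ) P = t.1 + t.2.1 (P -ᵥ O) + t.2.2 * (1 / 2 * g (P -ᵥ O) (P -ᵥ O)) :=
  rfl

/-- A quadratic function with zero Hessian is affine: the vanishing Hessian makes it preserve
midpoints, and then the defining identity makes it affine along every line. -/
lemma exists_linear_of_hessian_zero {δ : A → ℝ} (hq : IsQuadraticFn (V := V) δ)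
    (hH : IsHessianOf δ (0 : LinearMap.BilinForm ℝ V)) (O : A) :
    ∃ l : Module.Dual ℝ V, ∀ P, δ P = δ O + l (P -ᵥ O) := by
  have hmid : ∀ P Q : A, δ (midpoint ℝ P Q) = (δ P + δ Q) / 2 := fun P Q => by
    have := hH P Q
    simp only [LinearMap.zero_apply] at this
    linarith
  have hline : ∀ (P Q : A) (t : ℝ),
      δ (AffineMap.lineMap P Q t) = (1 - t) * δ P + t * δ Q := fun P Q t => by
    rw [hq P Q (1 - t) t (by ring), hmid]
    ring
  have hsmul : ∀ (r : ℝ) (v : V), δ (r • v +ᵥ O) - δ O = r * (δ (v +ᵥ O) - δ O) := fun r v => by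
    have h := hline O (v +ᵥ O) r
    rw [AffineMap.lineMap_apply, vadd_vsub] at h
    rw [h]
    ring
  refine ⟨{ toFun := fun v => δ (v +ᵥ O) - δ O, map_add' := fun v w => ?_, map_smul' := hsmul },
    fun P => by simp⟩
  -- `v + w` is twice the midpoint of `v` and `w`.
  have hm : midpoint ℝ (v +ᵥ O) (w +ᵥ O) = (1 / 2 : ℝ) • (v + w) +ᵥ O := by
    apply vsub_left_injective O
    beta_reduce
    rw [midpoint_vsub_origin]
    simp only [vadd_vsub]
  have h1 := hmid (v +ᵥ O) (w +ᵥ O)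
  have h2 := hsmul (1 / 2) (v + w)
  rw [hm] at h1
  linarith

lemma coord_surjective (g : LinearMap.BilinForm ℝ V) (hgs : ∀ x y, g x y = g y x) (O : A) :
    Function.Surjective (coord g hgs O) := by
  rintro ⟨δ, hδ, c, hc⟩
  -- Subtracting `c * q` kills the Hessian.
  have hmem := mem_Wg g hgs O 0 0 c
  set Q : A → ℝ := fun P => 0 + (0 : Module.Dual ℝ V) (P -ᵥ O) +
    c * (1 / 2 * g (P -ᵥ O) (P -ᵥ O)) with hQ
  have hq : IsQuadraticFn (V := V) (δ - Q) := ((Wg g A).sub_mem ⟨hδ, c, hc⟩ hmem).1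
  have hH : IsHessianOf (δ - Q) (0 : LinearMap.BilinForm ℝ V) := fun P R => by
    have h1 := hc P R
    rw [← vsub_sub_vsub_cancel_right R P O] at h1
    simp only [hQ, Pi.sub_apply, midpoint_vsub_origin, map_add, map_smul, map_sub,
      LinearMap.sub_apply, LinearMap.add_apply, LinearMap.smul_apply, smul_eq_mul,
      LinearMap.zero_apply, hgs (R -ᵥ O) (P -ᵥ O)] at h1 ⊢
    linear_combination h1
  obtain ⟨l, hl⟩ := exists_linear_of_hessian_zero hq hH O
  refine ⟨(δ O, l, c), ?_⟩
  ext P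
  have := hl P
  simp only [hQ, Pi.sub_apply, vsub_self, map_zero, LinearMap.zero_apply] at this
  rw [coord_apply]
  linear_combination -this

lemma finite_Wg [FiniteDimensional ℝ V] (g : LinearMap.BilinForm ℝ V)
    (hgs : ∀ x y, g x y = g y x) (O : A) : FiniteDimensional ℝ (Wg g A) :=
  Module.Finite.of_surjective _ (coord_surjective g hgs O)

lemma span_evW [FiniteDimensional ℝ V] (g : LinearMap.BilinForm ℝ V)
    (hgs : ∀ x y, g x y = g y x) (O : A) :
    Submodule.span ℝ (Set.range (evW g (A := A))) = ⊤ := by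
  have := finite_Wg g hgs O
  have h : (Submodule.span ℝ (Set.range (evW g (A := A)))).dualCoannihilator = ⊥ := by
    rw [eq_bot_iff]
    intro f hf
    rw [Submodule.mem_dualCoannihilator] at hf
    rw [Submodule.mem_bot]
    ext P
    exact hf _ (Submodule.subset_span ⟨P, rfl⟩)
  rw [← Subspace.dualCoannihilator_dualAnnihilator_eq
    (W := Submodule.span ℝ (Set.range (evW g (A := A)))), h, Submodule.dualAnnihilator_bot]

/-- The linear function `ℓ (· - O)` as an element of `W_g`, depending linearly on `ℓ`. -/
noncomputable def linPart (g : LinearMap.BilinForm ℝ V) (hgs : ∀ x y, g x y = g y x) (O : A) :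
    Module.Dual ℝ V →ₗ[ℝ] Wg g A :=
  coord g hgs O ∘ₗ LinearMap.inr ℝ ℝ (Module.Dual ℝ V × ℝ) ∘ₗ LinearMap.inl ℝ (Module.Dual ℝ V) ℝ

lemma linPart_apply (g : LinearMap.BilinForm ℝ V) (hgs : ∀ x y, g x y = g y x) (O P : A)
    (l : Module.Dual ℝ V) : (linPart g hgs O l : A → ℝ) P = l (P -ᵥ O) := by
  simp [linPart, coord_apply]

/-- The vector `x_φ`, defined for every functional `φ` on `W_g` relative to the origin `O` by
`φ (ℓ (· - O)) = ℓ x_φ`. It is independent of `O` when `φ` annihilates `1`. -/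
noncomputable def vec [FiniteDimensional ℝ V] (g : LinearMap.BilinForm ℝ V)
    (hgs : ∀ x y, g x y = g y x) (O : A) : Module.Dual ℝ (Wg g A) →ₗ[ℝ] V :=
  (Module.evalEquiv ℝ V).symm.toLinearMap ∘ₗ (linPart g hgs O).dualMap

lemma apply_vec [FiniteDimensional ℝ V] (g : LinearMap.BilinForm ℝ V)
    (hgs : ∀ x y, g x y = g y x) (O : A) (φ : Module.Dual ℝ (Wg g A)) (l : Module.Dual ℝ V) :
    l (vec g hgs O φ) = φ (linPart g hgs O l) := by
  simp [vec]

lemma vec_eq [FiniteDimensional ℝ V] (g : LinearMap.BilinForm ℝ V)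
    (hgs : ∀ x y, g x y = g y x) (O : A) (φ : Module.Dual ℝ (Wg g A)) (x : V)
    (h : ∀ l : Module.Dual ℝ V, φ (linPart g hgs O l) = l x) : vec g hgs O φ = x := by
  apply (Module.evalEquiv ℝ V).injective
  ext l
  simpa [apply_vec] using h l

lemma vec_evW [FiniteDimensional ℝ V] (g : LinearMap.BilinForm ℝ V)
    (hgs : ∀ x y, g x y = g y x) (O P : A) : vec g hgs O (evW g P) = P -ᵥ O :=
  vec_eq g hgs O _ _ fun l => linPart_apply g hgs O P l

lemma vec_eq_of_represents [FiniteDimensional ℝ V] (g : LinearMap.BilinForm ℝ V)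
    (hgs : ∀ x y, g x y = g y x) (O : A) (φ : Module.Dual ℝ (Wg g A)) (x : V)
    (h : Represents g φ x) : vec g hgs O φ = x := by
  refine vec_eq g hgs O φ x fun l => ?_
  let f : A →ᵃ[ℝ] ℝ :=
    { toFun := fun P => l (P -ᵥ O)
      linear := l
      map_vadd' := fun P v => by simp [vadd_vsub_assoc] }
  have hf : (linPart g hgs O l : A → ℝ) = f := funext fun P => linPart_apply g hgs O P l
  have hfm : ⇑f ∈ Wg g A := hf ▸ (linPart g hgs O l).2
  have hx := h f hfm
  have he : (⟨⇑f, hfm⟩ : Wg g A) = linPart g hgs O l := Subtype.ext hf.symm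
  rwa [he] at hx

lemma represents_vec [FiniteDimensional ℝ V] (g : LinearMap.BilinForm ℝ V)
    (hgs : ∀ x y, g x y = g y x) (O : A) (φ : Module.Dual ℝ (Wg g A))
    (h : AnnihilatesOne g φ) : Represents g φ (vec g hgs O φ) := by
  intro f hf
  have h1 : (fun _ : A => (1 : ℝ)) ∈ Wg g A := by simpa using mem_Wg g hgs O 1 0 0
  have he : (⟨⇑f, hf⟩ : Wg g A) = f O • ⟨_, h1⟩ + linPart g hgs O f.linear := by
    ext P
    simp [linPart_apply]
  rw [he, map_add, map_smul, h h1, apply_vec]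
  simp

/-- The Cayley–Menger form `φ 1 * ψ q + φ q * ψ 1 - g (x_φ) (x_ψ)`, with
`q P = g (P - O) (P - O) / 2`. -/
noncomputable def form [FiniteDimensional ℝ V] (g : LinearMap.BilinForm ℝ V)
    (hgs : ∀ x y, g x y = g y x) (O : A) :
    LinearMap.BilinForm ℝ (Module.Dual ℝ (Wg g A)) :=
  LinearMap.mk₂ ℝ (fun φ ψ =>
      φ (coord g hgs O (1, 0, 0)) * ψ (coord g hgs O (0, 0, 1)) +
      φ (coord g hgs O (0, 0, 1)) * ψ (coord g hgs O (1, 0, 0)) -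
      g (vec g hgs O φ) (vec g hgs O ψ))
    (fun _ _ _ => by simp only [map_add, LinearMap.add_apply]; ring)
    (fun _ _ _ => by simp only [map_smul, LinearMap.smul_apply, smul_eq_mul]; ring)
    (fun _ _ _ => by simp only [map_add, LinearMap.add_apply]; ring)
    (fun _ _ _ => by simp only [map_smul, LinearMap.smul_apply, smul_eq_mul]; ring)

lemma isCayleyMenger_form [FiniteDimensional ℝ V] (g : LinearMap.BilinForm ℝ V)
    (hgs : ∀ x y, g x y = g y x) (O : A) : IsCayleyMenger g A (form g hgs O) := by
  refine ⟨fun φ ψ => ?_, fun P => ?_, fun φ ψ x y hφ hψ hx hy => ?_⟩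
  · simp only [form, LinearMap.mk₂_apply, hgs (vec g hgs O φ)]
    ring
  · have h : ∀ t, evW g P (coord g hgs O t) = (coord g hgs O t : A → ℝ) P := fun _ => rfl
    simp only [form, LinearMap.mk₂_apply, vec_evW, h, coord_apply, LinearMap.zero_apply]
    ring
  · have h1 : (fun _ : A => (1 : ℝ)) ∈ Wg g A := by simpa using mem_Wg g hgs O 1 0 0
    have he : coord g hgs O (1, 0, 0) = ⟨_, h1⟩ := by
      ext P
      simp [coord_apply]
    simp only [form, LinearMap.mk₂_apply, he, hφ h1, hψ h1,
      vec_eq_of_represents g hgs O φ x hx, vec_eq_of_represents g hgs O ψ y hy]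
    ring

lemma isCayleyMenger_unique [FiniteDimensional ℝ V] (g : LinearMap.BilinForm ℝ V)
    (hgs : ∀ x y, g x y = g y x) (O : A) {C C' : LinearMap.BilinForm ℝ (Module.Dual ℝ (Wg g A))}
    (hC : IsCayleyMenger g A C) (hC' : IsCayleyMenger g A C') : C = C' := by
  obtain ⟨hs, hi, ha⟩ := hC
  obtain ⟨hs', hi', ha'⟩ := hC'
  have hann : ∀ P, AnnihilatesOne g (evW g P - evW g O) := fun P h1 => by
    simp [evW]
  have hdiff : ∀ P Q, C (evW g P - evW g O) (evW g Q - evW g O) =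
      C' (evW g P - evW g O) (evW g Q - evW g O) := fun P Q => by
    have hP := represents_vec g hgs O _ (hann P)
    have hQ := represents_vec g hgs O _ (hann Q)
    rw [ha _ _ _ _ (hann P) (hann Q) hP hQ, ha' _ _ _ _ (hann P) (hann Q) hP hQ]
  simp only [map_sub, LinearMap.sub_apply, hi, hi'] at hdiff
  have hO : ∀ P, C (evW g O) (evW g P) = C' (evW g O) (evW g P) := fun P => by
    have h := hdiff P P
    rw [hi, hi', hs (evW g P), hs' (evW g P)] at h
    linarith
  have hev : ∀ P Q, C (evW g P) (evW g Q) = C' (evW g P) (evW g Q) := fun P Q => by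
    have h := hdiff P Q
    rw [hs (evW g P) (evW g O), hs' (evW g P) (evW g O), hO P, hO Q] at h
    linarith
  refine LinearMap.ext_on_range (span_evW g hgs O) fun P => ?_
  exact LinearMap.ext_on_range (span_evW g hgs O) fun Q => hev P Q

end CayleyMenger

/-- For every nonzero symmetric bilinear form `g` on `V` there is a
unique symmetric bilinear form `C` (the Cayley–Menger form) on the dual of `W_g`
satisfying: (i) `C(ev_P, ev_P) = 0` for every point `P ∈ A`; and (ii)
`C(φ, ψ) = −g(x_φ, x_ψ)` for all functionals `φ, ψ` annihilating the constant
function `1`, where `x_φ` is the vector representing `φ` on affine functions. -/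
theorem stmt15 {V A : Type*} [AddCommGroup V] [Module ℝ V] [AddTorsor V A]
    [FiniteDimensional ℝ V]
    (g : LinearMap.BilinForm ℝ V) (hgs : ∀ x y, g x y = g y x) (hg0 : g ≠ 0) :
    ∃! C : LinearMap.BilinForm ℝ (Module.Dual ℝ (Wg g A)),
      IsCayleyMenger g A C := by
  obtain ⟨O⟩ : Nonempty A := inferInstance
  exact ⟨CayleyMenger.form g hgs O, CayleyMenger.isCayleyMenger_form g hgs O,
    fun _ hC => CayleyMenger.isCayleyMenger_unique g hgs O hC
      (CayleyMenger.isCayleyMenger_form g hgs O)⟩
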